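/- Let (E,d_E) be a finite metric space, let p ≥ 1, let r, n ∈ ℕ, let y₁,…,y_{2r} ∈ E be distinct points and let z₁,…,z_r ∈ E. Let μ = (1/(2r))∑_{i=1}^{2r} δ_{y_i} and μ̃ = (1/r)∑_{i=1}^{r} δ_{z_i}, and let μ_n and μ̃_n be empirical measures of μ and μ̃, respectively, with sample size n. Then ‖W_p^$(μ_n, μ)‖_{L^p} ≤ ‖W_p^$(μ̃_n, μ̃)‖_{L^p} + 2^{1 − 1/p} · (2r/n)^{1/(2p)} · W_p(μ, μ̃), where for a random variable W, ‖W‖_{L^p} = (𝔼|W|^p)^{1/p}. -/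

import Mathlib

open MeasureTheory ENNReal Filter

noncomputable section

/-- The `p`-Wasserstein distance between two measures on a metric space, as an
extended nonnegative real: the infimum over all couplings `γ` (measures on `E × E`
with the prescribed marginals) of `(∫ d(x,y)^p dγ)^(1/p)`. -/
def Wp {E : Type*} [MetricSpace E] [MeasurableSpace E] (p : ℝ) (μ ν : Measure E) : ℝ≥0∞ :=
  ⨅ γ ∈ {γ : Measure (E × E) | γ.map Prod.fst = μ ∧ γ.map Prod.snd = ν},
    (∫⁻ z, edist z.1 z.2 ^ p ∂γ) ^ (1 / p)

/-- The (uniform) discrete measure `(1/n) ∑ δ_{X i}`. -/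
def empiricalMeasure {E : Type*} [MeasurableSpace E] (n : ℕ) (X : Fin n → E) : Measure E :=
  (n : ℝ≥0∞)⁻¹ • ∑ i, Measure.dirac (X i)

/-- The law of `n` independent samples of `μ`. -/
def sampleMeasure {E : Type*} [MeasurableSpace E] (μ : Measure E) (n : ℕ) :
    Measure (Fin n → E) :=
  Measure.pi fun _ => μ

/-- `𝔼[W_p(μ_n, μ)]`, where `μ_n` is the empirical measure of `μ` with sample size `n`. -/
def expWp {E : Type*} [MetricSpace E] [MeasurableSpace E] (p : ℝ) (μ : Measure E) (n : ℕ) :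
    ℝ≥0∞ :=
  ∫⁻ X, Wp p (empiricalMeasure n X) μ ∂(sampleMeasure μ n)

/-- `(𝔼[W_p(μ_n, μ)^p])^{1/p}`, where `μ_n` is the empirical measure of `μ` with
sample size `n`. -/
def expWpPow {E : Type*} [MetricSpace E] [MeasurableSpace E] (p : ℝ) (μ : Measure E) (n : ℕ) :
    ℝ≥0∞ :=
  (∫⁻ X, (Wp p (empiricalMeasure n X) μ) ^ p ∂(sampleMeasure μ n)) ^ (1 / p)

/-- The optimal uniform quantization error
`b_{n,p}(μ) = inf_{x₁,…,x_n} W_p(μ, (1/n) ∑ δ_{x_i})`. -/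
def unifQuantErr {E : Type*} [MetricSpace E] [MeasurableSpace E] (p : ℝ) (n : ℕ)
    (μ : Measure E) : ℝ≥0∞ :=
  ⨅ x : Fin n → E, Wp p μ (empiricalMeasure n x)

/-- The optimal quantization error `e_{n,p}(μ)`: the infimum of `W_p(μ, ν)` over all
probability measures `ν` supported on at most `n` points. -/
def quantErr {E : Type*} [MetricSpace E] [MeasurableSpace E] (p : ℝ) (n : ℕ)
    (μ : Measure E) : ℝ≥0∞ :=
  ⨅ ν ∈ {ν : Measure E | IsProbabilityMeasure ν ∧
      ∃ S : Finset E, S.card ≤ n ∧ ν (↑S : Set E)ᶜ = 0}, Wp p μ ν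

/-- `μ` has a finite `p`-th moment: `∫ d(x, x₀)^p dμ(x) < ∞` for some `x₀`. -/
def HasFiniteMoment {E : Type*} [MetricSpace E] [MeasurableSpace E] (p : ℝ)
    (μ : Measure E) : Prop :=
  ∃ x₀ : E, ∫⁻ x, edist x x₀ ^ p ∂μ ≠ ∞

end

/-- The measure `μ∧ν` on a finite space, with `(μ∧ν)({x}) = min(μ({x}), ν({x}))`. -/
noncomputable def measInf {E : Type*} [Fintype E] [MeasurableSpace E]
    (μ ν : Measure E) : Measure E :=
  ∑ x : E, min (μ {x}) (ν {x}) • Measure.dirac x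

/-- `W_p^$(μ,ν)`: equal to `0` when `μ = ν`, and otherwise to
`(1 − (μ∧ν)(E))^{1/p} W_p((μ − μ∧ν)/(1 − (μ∧ν)(E)), (ν − μ∧ν)/(1 − (μ∧ν)(E)))`. -/
noncomputable def WpDollar {E : Type*} [MetricSpace E] [Fintype E] [MeasurableSpace E]
    (p : ℝ) (μ ν : Measure E) : ℝ≥0∞ :=
  if μ = ν then 0
  else
    (1 - measInf μ ν Set.univ) ^ (1 / p) *
      Wp p ((1 - measInf μ ν Set.univ)⁻¹ • (μ - measInf μ ν))
        ((1 - measInf μ ν Set.univ)⁻¹ • (ν - measInf μ ν))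

section Helpers

variable {E : Type*}

/-- Function-level transport cost on a finite space. -/
noncomputable def FW [MetricSpace E] [Fintype E] (p : ℝ) (a b : E → ℝ≥0∞) : ℝ≥0∞ :=
  ⨅ g ∈ {g : E → E → ℝ≥0∞ | (∀ x, ∑ y, g x y = a x) ∧ (∀ y, ∑ x, g x y = b y)},
    (∑ x, ∑ y, edist x y ^ p * g x y) ^ (1 / p)

lemma map_sing {A B : Type*} [Fintype A] [DecidableEq B] [MeasurableSpace A] [MeasurableSpace B]
    [MeasurableSingletonClass A] [MeasurableSingletonClass B] (μ : Measure A) (f : A → B) (b : B) :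
    μ.map f {b} = ∑ a, if f a = b then μ {a} else 0 := by
  classical
  rw [Measure.map_apply (measurable_of_finite f) (measurableSet_singleton b),
    ← lintegral_indicator_one ((measurable_of_finite f) (measurableSet_singleton b)),
    lintegral_fintype]
  refine Finset.sum_congr rfl fun a _ => ?_
  by_cases h : f a = b <;> simp [Set.indicator, h]

lemma exists_meas {A : Type*} [Fintype A] [MeasurableSpace A] [MeasurableSingletonClass A]
    (g : A → ℝ≥0∞) : ∃ γ : Measure A, ∀ a, γ {a} = g a := by
  classical
  refine ⟨∑ a, g a • Measure.dirac a, fun b => ?_⟩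
  simp [Measure.finsetSum_apply, Set.indicator]

lemma Wp_eq_FW [MetricSpace E] [Fintype E] [MeasurableSpace E] [BorelSpace E] (p : ℝ)
    (μ ν : Measure E) : Wp p μ ν = FW p (fun x => μ {x}) (fun x => ν {x}) := by
  classical
  have key : ∀ γ : Measure (E × E), (∫⁻ z, edist z.1 z.2 ^ p ∂γ) =
      ∑ x, ∑ y, edist x y ^ p * γ {(x, y)} := by
    intro γ
    rw [lintegral_fintype, Fintype.sum_prod_type]
  have m1 : ∀ (γ : Measure (E × E)) x, γ.map Prod.fst {x} = ∑ y, γ {(x, y)} := by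
    intro γ x
    rw [map_sing, Fintype.sum_prod_type, Finset.sum_eq_single x]
    · simp
    · intro b _ hb; simp [hb]
    · simp
  have m2 : ∀ (γ : Measure (E × E)) y, γ.map Prod.snd {y} = ∑ x, γ {(x, y)} := by
    intro γ x
    rw [map_sing, Fintype.sum_prod_type]
    simp
  apply le_antisymm
  · refine le_iInf₂ fun g hg => ?_
    obtain ⟨γ, hγ⟩ := exists_meas (fun z : E × E => g z.1 z.2)
    refine (iInf₂_le γ ?_).trans (le_of_eq ?_)
    · refine ⟨Measure.ext_of_singleton fun x => ?_, Measure.ext_of_singleton fun x => ?_⟩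
      · rw [m1]; simp only [hγ]; exact hg.1 x
      · rw [m2]; simp only [hγ]; exact hg.2 x
    · rw [key]; simp only [hγ]
  · refine le_iInf₂ fun γ hγ => ?_
    refine (iInf₂_le (fun x y => γ {(x, y)}) ?_).trans (le_of_eq ?_)
    · refine ⟨fun x => ?_, fun x => ?_⟩
      · rw [← m1, hγ.1]
      · rw [← m2, hγ.2]
    · rw [key]

lemma FW_scale_le [MetricSpace E] [Fintype E] {p : ℝ} (hp : 1 ≤ p) (a b : E → ℝ≥0∞)
    (c : ℝ≥0∞) (h0 : c ≠ 0) (ht : c ≠ ⊤) :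
    FW p (fun x => c * a x) (fun x => c * b x) ≤ c ^ (1 / p) * FW p a b := by
  have hp0 : 0 ≤ 1 / p := by positivity
  have hc0 : c ^ (1 / p) ≠ 0 := by simp [ENNReal.rpow_eq_zero_iff, h0, ht]
  have hct : c ^ (1 / p) ≠ ⊤ := ENNReal.rpow_ne_top_of_nonneg hp0 ht
  rw [FW, FW, ENNReal.mul_iInf_of_ne hc0 hct]
  refine le_iInf fun g => ?_
  rw [ENNReal.mul_iInf_of_ne hc0 hct]
  refine le_iInf fun hg => ?_
  refine (iInf₂_le (fun x y => c * g x y) ?_).trans (le_of_eq ?_)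
  · refine ⟨fun x => ?_, fun x => ?_⟩
    · rw [← Finset.mul_sum, hg.1]
    · rw [← Finset.mul_sum, hg.2]
  · rw [← ENNReal.mul_rpow_of_nonneg _ _ hp0]
    congr 1
    simp only [Finset.mul_sum]
    refine Finset.sum_congr rfl fun x _ => Finset.sum_congr rfl fun y _ => by ring

lemma FW_scale [MetricSpace E] [Fintype E] {p : ℝ} (hp : 1 ≤ p) (a b : E → ℝ≥0∞)
    (c : ℝ≥0∞) (h0 : c ≠ 0) (ht : c ≠ ⊤) :
    c ^ (1 / p) * FW p (fun x => c⁻¹ * a x) (fun x => c⁻¹ * b x) = FW p a b := by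
  have hp0 : 0 ≤ 1 / p := by positivity
  have h : ∀ f : E → ℝ≥0∞, (fun x => c * (c⁻¹ * f x)) = f := by
    intro f; funext x; rw [← mul_assoc, ENNReal.mul_inv_cancel h0 ht, one_mul]
  apply le_antisymm
  · have := FW_scale_le hp a b c⁻¹ (by simpa) (by simpa)
    calc _ ≤ c ^ (1 / p) * (c⁻¹ ^ (1 / p) * FW p a b) := by gcongr
      _ = _ := by
        rw [← mul_assoc, ← ENNReal.mul_rpow_of_nonneg _ _ hp0, ENNReal.mul_inv_cancel h0 ht]
        simp
  · have := FW_scale_le hp (fun x => c⁻¹ * a x) (fun x => c⁻¹ * b x) c h0 ht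
    simpa only [h] using this

lemma WpDollar_eq [MetricSpace E] [Fintype E] [MeasurableSpace E] [BorelSpace E] {p : ℝ}
    (hp : 1 ≤ p) (μ ν : Measure E) [IsProbabilityMeasure μ] [IsProbabilityMeasure ν] :
    WpDollar p μ ν = FW p (fun x => μ {x} - ν {x}) (fun x => ν {x} - μ {x}) := by
  classical
  have hp0 : (0 : ℝ) < 1 / p := by positivity
  have hpp : (0 : ℝ) < p := by positivity
  have hs : ∀ x, measInf μ ν {x} = min (μ {x}) (ν {x}) := by
    intro b
    simp [measInf, Measure.finsetSum_apply, Set.indicator]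
  have hle : ∀ μ ν : Measure E, (∀ x, μ {x} ≤ ν {x}) → μ ≤ ν := by
    intro μ ν h
    refine Measure.le_iff.2 fun s hs => ?_
    rw [← lintegral_indicator_one hs, ← lintegral_indicator_one hs, lintegral_fintype,
      lintegral_fintype]
    exact Finset.sum_le_sum fun x _ => mul_le_mul_right (h x) _
  have l1 : measInf μ ν ≤ μ := hle _ _ fun x => by rw [hs]; exact min_le_left _ _
  have l2 : measInf μ ν ≤ ν := hle _ _ fun x => by rw [hs]; exact min_le_right _ _
  have : IsFiniteMeasure (measInf μ ν) := isFiniteMeasure_of_le μ l1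
  have eq1 : ∀ x, (μ - measInf μ ν) {x} = μ {x} - ν {x} := fun x => by
    rw [Measure.sub_apply (measurableSet_singleton x) l1, hs, tsub_min]
  have eq2 : ∀ x, (ν - measInf μ ν) {x} = ν {x} - μ {x} := fun x => by
    rw [Measure.sub_apply (measurableSet_singleton x) l2, hs, min_comm, tsub_min]
  unfold WpDollar
  split_ifs with h
  · subst h
    symm
    refine le_antisymm ((iInf₂_le (fun _ _ => 0) ?_).trans (le_of_eq ?_)) bot_le
    · simp
    · simp [hpp]
  · rw [Wp_eq_FW]
    simp only [Measure.smul_apply, eq1, eq2, smul_eq_mul]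
    apply FW_scale hp
    · intro h0
      apply h
      have h1 : 1 ≤ measInf μ ν Set.univ := tsub_eq_zero_iff_le.1 h0
      have e1 : measInf μ ν = μ := Measure.eq_of_le_of_measure_univ_eq l1
        (le_antisymm (l1 _) (by rw [measure_univ]; exact h1))
      have e2 : measInf μ ν = ν := Measure.eq_of_le_of_measure_univ_eq l2
        (le_antisymm (l2 _) (by rw [measure_univ]; exact h1))
      rw [← e1, e2]
    · exact ne_top_of_le_ne_top ENNReal.one_ne_top tsub_le_self

/-- one-sided lifting of a coupling -/
lemma lift_left {A B F : Type*} [Fintype A] [Fintype B] [Fintype F] [DecidableEq B] (T : A → B)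
    (a : A → ℝ≥0∞) (ha : ∀ x, a x ≠ ⊤) (b : F → ℝ≥0∞) (g : B → F → ℝ≥0∞)
    (h1 : ∀ u, ∑ v, g u v = ∑ x, if T x = u then a x else 0)
    (h2 : ∀ v, ∑ u, g u v = b v) :
    ∃ k : A → F → ℝ≥0∞, (∀ x, ∑ v, k x v = a x) ∧ (∀ v, ∑ x, k x v = b v) ∧
      ∀ (c : B → F → ℝ≥0∞), ∑ x, ∑ v, c (T x) v * k x v = ∑ u, ∑ v, c u v * g u v := by
  set t : B → ℝ≥0∞ := fun u => ∑ x, if T x = u then a x else 0 with ht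
  have htop : ∀ u, t u ≠ ⊤ := fun u => by
    rw [ht]; simp only; rw [ENNReal.sum_ne_top]; intro x _; split_ifs <;> simp [ha]
  have hat : ∀ x, a x ≤ t (T x) := fun x => by
    have := Finset.single_le_sum (f := fun x' => if T x' = T x then a x' else 0)
      (fun _ _ => zero_le) (Finset.mem_univ x)
    simpa using this
  have hgt : ∀ u v, g u v ≤ t u := fun u v => by
    rw [ht]; simp only; rw [← h1]
    exact Finset.single_le_sum (f := fun v => g u v) (fun _ _ => zero_le) (Finset.mem_univ v)
  have main : ∀ u v, ∑ x, (if T x = u then (a x / t u) * g u v else 0) = g u v := by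
    intro u v
    have : ∑ x, (if T x = u then (a x / t u) * g u v else 0)
        = (t u / t u) * g u v := by
      rw [ht]; simp only [div_eq_mul_inv, Finset.sum_mul]
      refine Finset.sum_congr rfl fun x _ => ?_
      split_ifs <;> simp
    rw [this]
    by_cases h0 : t u = 0
    · have := hgt u v
      rw [h0] at this
      simp [le_antisymm this zero_le]
    · rw [ENNReal.div_self h0 (htop u), one_mul]
  have fib : ∀ (c : B → ℝ≥0∞) v, ∑ x, c (T x) * (a x / t (T x) * g (T x) v)
      = ∑ u, c u * g u v := by
    intro c v
    simp_rw [fun u => (congrArg (fun z => c u * z) (main u v)).symm, Finset.mul_sum]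
    rw [Finset.sum_comm]
    refine Finset.sum_congr rfl fun x _ => ?_
    rw [Finset.sum_eq_single (T x)]
    · simp
    · intro u _ hu; simp [Ne.symm hu]
    · simp
  refine ⟨fun x v => a x / t (T x) * g (T x) v, fun x => ?_, fun v => ?_, fun c => ?_⟩
  · rw [← Finset.mul_sum, h1]
    change a x / t (T x) * t (T x) = a x
    apply ENNReal.div_mul_cancel'
    · intro h0; exact le_antisymm ((hat x).trans h0.le) zero_le
    · intro h; exact absurd h (htop _)
  · have := fib (fun _ => 1) v
    simp only [one_mul] at this
    rw [this, h2]
  · rw [Finset.sum_comm]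
    conv_rhs => rw [Finset.sum_comm]
    exact Finset.sum_congr rfl fun v _ => fib (fun u => c u v) v

lemma lift_both {A B : Type*} [Fintype A] [Fintype B] [DecidableEq B] (T : A → B)
    (a b : A → ℝ≥0∞) (ha : ∀ x, a x ≠ ⊤) (hb : ∀ x, b x ≠ ⊤) (g : B → B → ℝ≥0∞)
    (h1 : ∀ u, ∑ v, g u v = ∑ x, if T x = u then a x else 0)
    (h2 : ∀ v, ∑ u, g u v = ∑ x, if T x = v then b x else 0) :
    ∃ k : A → A → ℝ≥0∞, (∀ x, ∑ v, k x v = a x) ∧ (∀ v, ∑ x, k x v = b v) ∧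
      ∀ (c : B → B → ℝ≥0∞), ∑ x, ∑ y, c (T x) (T y) * k x y = ∑ u, ∑ v, c u v * g u v := by
  obtain ⟨k, k1, k2, k3⟩ := lift_left T a ha _ g h1 h2
  obtain ⟨l, l1, l2, l3⟩ := lift_left T b hb a (fun v x => k x v) k2 k1
  refine ⟨fun x y => l y x, l2, l1, fun c => ?_⟩
  have := l3 (fun v x => c (T x) v)
  rw [← k3, Finset.sum_comm, this, Finset.sum_comm]

lemma weighted_minkowski {ι : Type*} [Fintype ι] {p : ℝ} (hp : 1 ≤ p) (f g w : ι → ℝ≥0∞) :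
    (∑ i, (f i + g i) ^ p * w i) ^ (1 / p) ≤
      (∑ i, f i ^ p * w i) ^ (1 / p) + (∑ i, g i ^ p * w i) ^ (1 / p) := by
  have hpp : (0 : ℝ) < p := by positivity
  have h := ENNReal.Lp_add_le Finset.univ (fun i => f i * w i ^ (1 / p))
    (fun i => g i * w i ^ (1 / p)) hp
  simp only [← add_mul, ENNReal.mul_rpow_of_nonneg _ _ hpp.le, ← ENNReal.rpow_mul,
    one_div_mul_cancel hpp.ne', ENNReal.rpow_one] at h
  exact h

lemma FW_chain [MetricSpace E] [Fintype E] [DecidableEq E] {p : ℝ} (hp : 1 ≤ p)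
    (α m : E → ℝ≥0∞) (hα : ∀ x, α x ≠ ⊤) (hm : ∀ x, m x ≠ ⊤) (T : E → E) :
    FW p (fun x => α x - m x) (fun x => m x - α x) ≤
      FW p (fun u => (∑ x, if T x = u then α x else 0) - ∑ x, if T x = u then m x else 0)
        (fun u => (∑ x, if T x = u then m x else 0) - ∑ x, if T x = u then α x else 0) +
      (2 ^ (p - 1) * ∑ x, edist x (T x) ^ p * ((α x - m x) + (m x - α x))) ^ (1 / p) := by
  have hpp : (0 : ℝ) < p := by positivity
  conv_rhs => rw [FW]
  rw [ENNReal.iInf_add]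
  refine le_iInf fun g => ?_
  rw [ENNReal.iInf_add]
  refine le_iInf fun hg => ?_
  obtain ⟨g1, g2⟩ := hg
  set S : (E → ℝ≥0∞) → E → ℝ≥0∞ := fun f u => ∑ x, if T x = u then f x else 0 with hS
  have Sadd : ∀ f h u, S (fun x => f x + h x) u = S f u + S h u := fun f h u => by
    simp only [hS, ← Finset.sum_add_distrib]
    refine Finset.sum_congr rfl fun x _ => ?_
    split_ifs <;> simp
  have Stop : ∀ f : E → ℝ≥0∞, (∀ x, f x ≠ ⊤) → ∀ u, S f u ≠ ⊤ := fun f hf u => by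
    simp only [hS]; rw [ENNReal.sum_ne_top]; intro x _; split_ifs <;> simp [hf]
  set a : E → ℝ≥0∞ := fun x => α x - m x with ha
  set b : E → ℝ≥0∞ := fun x => m x - α x with hb
  have hat : ∀ x, a x ≠ ⊤ := fun x => ne_top_of_le_ne_top (hα x) tsub_le_self
  have hbt : ∀ x, b x ≠ ⊤ := fun x => ne_top_of_le_ne_top (hm x) tsub_le_self
  have bal : ∀ u, S a u + S m u = S b u + S α u := fun u => by
    rw [← Sadd, ← Sadd]
    congr 1
    funext x
    simp only [ha, hb, tsub_add_eq_max, max_comm]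
  have hC : ∀ u, ∃ C, (S α u - S m u) + C = S a u ∧ (S m u - S α u) + C = S b u := by
    intro u
    have hb' := bal u
    rcases le_total (S α u) (S m u) with h | h
    · refine ⟨S a u, by simp [tsub_eq_zero_of_le h], ?_⟩
      have : S α u + ((S m u - S α u) + S a u) = S α u + S b u := by
        rw [← add_assoc, add_tsub_cancel_of_le h, add_comm, hb', add_comm]
      exact (ENNReal.add_right_inj (Stop α hα u)).1 this
    · refine ⟨S b u, ?_, by simp [tsub_eq_zero_of_le h]⟩
      have : S m u + ((S α u - S m u) + S b u) = S m u + S a u := by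
        rw [← add_assoc, add_tsub_cancel_of_le h, add_comm, ← hb', add_comm]
      exact (ENNReal.add_right_inj (Stop m hm u)).1 this
  choose C hC1 hC2 using hC
  obtain ⟨k, k1, k2, k3⟩ := lift_both T a b hat hbt
    (fun u v => g u v + if u = v then C u else 0)
    (fun u => by
      rw [Finset.sum_add_distrib, g1]; simpa using hC1 u)
    (fun u => by
      rw [Finset.sum_add_distrib, g2]; simpa using hC2 u)
  have k3' := k3 (fun u v => edist u v ^ p)
  have kd : ∑ u, ∑ v, edist u v ^ p * (g u v + if u = v then C u else 0)
      = ∑ u, ∑ v, edist u v ^ p * g u v := by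
    refine Finset.sum_congr rfl fun u _ => Finset.sum_congr rfl fun v _ => ?_
    by_cases h : u = v
    · subst h; simp [hpp]
    · simp [h]
  rw [kd] at k3'
  rw [← k3']
  refine (iInf₂_le k ⟨k1, k2⟩).trans ?_
  have hmin := weighted_minkowski hp (fun z : E × E => edist (T z.1) (T z.2))
    (fun z : E × E => edist z.1 (T z.1) + edist z.2 (T z.2)) (fun z => k z.1 z.2)
  simp only [Fintype.sum_prod_type] at hmin
  refine le_trans ?_ (hmin.trans ?_)
  · gcongr with x _ y _
    calc edist x y ≤ edist x (T x) + edist (T x) (T y) + edist (T y) y := edist_triangle4 _ _ _ _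
      _ = _ := by rw [edist_comm (T y) y]; ring
  · gcongr
    calc _ ≤ ∑ x, ∑ y, (2 ^ (p - 1) * (edist x (T x) ^ p + edist y (T y) ^ p)) * k x y := by
          gcongr with x _ y _
          exact ENNReal.rpow_add_le_mul_rpow_add_rpow _ _ hp
      _ = 2 ^ (p - 1) * ((∑ x, edist x (T x) ^ p * ∑ y, k x y) +
            ∑ x, ∑ y, edist y (T y) ^ p * k x y) := by
          simp only [Finset.mul_sum, ← Finset.sum_add_distrib]
          refine Finset.sum_congr rfl fun x _ => Finset.sum_congr rfl fun y _ => by ring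
      _ = _ := by
          rw [Finset.sum_comm (f := fun x y => edist y (T y) ^ p * k x y)]
          simp only [← Finset.mul_sum, k1, k2, mul_add, Finset.sum_add_distrib, ha, hb]

end Helpers

section Helpers2

variable {E : Type*}

lemma lintegral_emp [MeasurableSpace E] [MeasurableSingletonClass E] (N : ℕ) (y : Fin N → E)
    (f : E → ℝ≥0∞) :
    ∫⁻ x, f x ∂(empiricalMeasure N y) = (N : ℝ≥0∞)⁻¹ * ∑ i, f (y i) := by
  simp [empiricalMeasure, lintegral_smul_measure, lintegral_finsetSum_measure]

lemma isProb_emp [MeasurableSpace E] (N : ℕ) (hN : 1 ≤ N) (y : Fin N → E) :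
    IsProbabilityMeasure (empiricalMeasure N y) := by
  constructor
  have h0 : (N : ℝ≥0∞) ≠ 0 := by simp; omega
  simp [empiricalMeasure, Measure.finsetSum_apply,
    ENNReal.inv_mul_cancel h0 (ENNReal.natCast_ne_top N)]

lemma map_emp [Finite E] [MeasurableSpace E] [MeasurableSingletonClass E] (N : ℕ) (y : Fin N → E)
    (T : E → E) : (empiricalMeasure N y).map T = empiricalMeasure N (T ∘ y) := by
  have hT : Measurable T := measurable_of_finite T
  simp [empiricalMeasure, Measure.map_smul, Measure.map_finset_sum hT.aemeasurable,
    Measure.map_dirac' hT]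

lemma emp_sing [DecidableEq E] [MeasurableSpace E] [MeasurableSingletonClass E]
    (N : ℕ) (y : Fin N → E) (x : E) :
    empiricalMeasure N y {x} = (N : ℝ≥0∞)⁻¹ * ∑ i, if y i = x then 1 else 0 := by
  simp [empiricalMeasure, Measure.finsetSum_apply, Set.indicator]

lemma emp_perm [MeasurableSpace E] (N : ℕ) (w : Fin N → E) (σ : Equiv.Perm (Fin N)) :
    empiricalMeasure N (w ∘ σ) = empiricalMeasure N w := by
  unfold empiricalMeasure
  congr 1
  exact Equiv.sum_comp σ (fun i => Measure.dirac (w i))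

lemma emp_double [MeasurableSpace E] (r : ℕ) (z : Fin r → E) :
    ∃ w : Fin (2 * r) → E, empiricalMeasure (2 * r) w = empiricalMeasure r z := by
  refine ⟨fun k => z (finProdFinEquiv.symm k).2, ?_⟩
  unfold empiricalMeasure
  rw [Equiv.sum_comp (finProdFinEquiv.symm : Fin (2 * r) ≃ Fin 2 × Fin r)
    (fun q => Measure.dirac (z q.2)), Fintype.sum_prod_type]
  simp only [Fin.sum_univ_two, ← two_smul ℝ≥0∞]
  rw [smul_smul]
  congr 1
  push_cast
  rw [ENNReal.mul_inv (by simp) (by simp), mul_right_comm,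
    ENNReal.inv_mul_cancel (by simp) (by simp), one_mul]

lemma birkhoff_min {N : ℕ} (c : Fin N → Fin N → ℝ) : ∃ σ : Equiv.Perm (Fin N),
    ∀ M ∈ doublyStochastic ℝ (Fin N), ∑ i, c i (σ i) ≤ ∑ i, ∑ k, c i k * M i k := by
  obtain ⟨σ, hσ⟩ := Finite.exists_min (fun σ : Equiv.Perm (Fin N) => ∑ i, c i (σ i))
  refine ⟨σ, fun M hM => ?_⟩
  obtain ⟨w, w0, w1, rfl⟩ := exists_eq_sum_perm_of_mem_doublyStochastic hM
  have : ∑ i, ∑ k, c i k * (∑ τ : Equiv.Perm (Fin N), w τ • Equiv.Perm.permMatrix ℝ τ) i k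
      = ∑ τ : Equiv.Perm (Fin N), w τ * ∑ i, c i (τ i) := by
    simp only [Matrix.sum_apply, Matrix.smul_apply, smul_eq_mul, Finset.mul_sum]
    have : ∀ i, ∑ k, ∑ τ : Equiv.Perm (Fin N), c i k * (w τ * Equiv.Perm.permMatrix ℝ τ i k)
        = ∑ τ : Equiv.Perm (Fin N), w τ * c i (τ i) := by
      intro i
      rw [Finset.sum_comm]
      refine Finset.sum_congr rfl fun τ _ => ?_
      simp [Equiv.Perm.permMatrix, PEquiv.toMatrix_apply, mul_comm]
    rw [Finset.sum_congr rfl fun i _ => this i, Finset.sum_comm]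
  rw [this]
  calc _ = ∑ τ : Equiv.Perm (Fin N), w τ * ∑ i, c i (σ i) := by
        rw [← Finset.sum_mul, w1, one_mul]
    _ ≤ _ := Finset.sum_le_sum fun τ _ => mul_le_mul_of_nonneg_left (hσ τ) (w0 τ)

lemma exists_map [MetricSpace E] [Fintype E] [MeasurableSpace E] [BorelSpace E]
    {p : ℝ} (hp : 1 ≤ p) (N : ℕ) (hN : 1 ≤ N) (y : Fin N → E) (hy : Function.Injective y)
    (w : Fin N → E) :
    ∃ T : E → E, (empiricalMeasure N y).map T = empiricalMeasure N w ∧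
      ∑ x, edist x (T x) ^ p * empiricalMeasure N y {x} ≤
        (Wp p (empiricalMeasure N y) (empiricalMeasure N w)) ^ p := by
  classical
  have hpp : (0 : ℝ) < p := by positivity
  have hN0 : (N : ℝ≥0∞) ≠ 0 := by simp; omega
  have hNt : (N : ℝ≥0∞) ≠ ⊤ := ENNReal.natCast_ne_top N
  set μ := empiricalMeasure N y with hμ
  set ν := empiricalMeasure N w with hν
  have : IsProbabilityMeasure μ := isProb_emp N hN y
  have : IsProbabilityMeasure ν := isProb_emp N hN w
  obtain ⟨σ, hσ⟩ := birkhoff_min (fun i k => dist (y i) (w k) ^ p)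
  refine ⟨Function.extend y (w ∘ σ) id, ?_, ?_⟩
  · rw [hμ, map_emp, hν, ← emp_perm N w σ]
    congr 1
    funext i
    simp [hy.extend_apply]
  rw [← lintegral_fintype, hμ, lintegral_emp, ← hμ]
  simp only [hy.extend_apply, Function.comp_apply]
  rw [Wp_eq_FW, ← ENNReal.rpow_inv_le_iff hpp, ← one_div p]
  refine le_iInf₂ fun g hg => ?_
  obtain ⟨g1, g2⟩ := hg
  beta_reduce at g1 g2
  refine ENNReal.rpow_le_rpow ?_ (by positivity)
  have hed : ∀ a b : E, edist a b ^ p = ENNReal.ofReal (dist a b ^ p) := fun a b => by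
    rw [edist_dist, ENNReal.ofReal_rpow_of_nonneg dist_nonneg hpp.le]
  -- facts about μ, ν
  have μy : ∀ i, μ {y i} = (N : ℝ≥0∞)⁻¹ := fun i => by
    rw [hμ, emp_sing]; simp [hy.eq_iff]
  have μ0 : ∀ x, x ∉ Set.range y → μ {x} = 0 := fun x hx => by
    rw [hμ, emp_sing]
    have : ∀ i, y i ≠ x := fun i h => hx ⟨i, h⟩
    simp [this]
  have gν : ∀ x v, g x v ≤ ν {v} := fun x v => by
    rw [← g2]
    exact Finset.single_le_sum (f := fun x => g x v) (fun _ _ => zero_le) (Finset.mem_univ x)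
  have gμ : ∀ x v, g x v ≤ μ {x} := fun x v => by
    rw [← g1]
    exact Finset.single_le_sum (f := fun v => g x v) (fun _ _ => zero_le) (Finset.mem_univ v)
  have cancel : ∀ x v, g x v / ν {v} * ν {v} = g x v := fun x v => by
    apply ENNReal.div_mul_cancel'
    · intro h0; exact le_antisymm ((gν x v).trans h0.le) zero_le
    · intro h; exact absurd h (measure_ne_top _ _)
  have sumw : ∀ (f : E → ℝ≥0∞), ∑ k, f (w k) = N * ∑ v, f v * ν {v} := fun f => by
    rw [← lintegral_fintype, hν, lintegral_emp, ← mul_assoc, ENNReal.mul_inv_cancel hN0 hNt,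
      one_mul]
  have sumy : ∀ (f : E → ℝ≥0∞), (∀ x, x ∉ Set.range y → f x = 0) → ∑ i, f (y i) = ∑ x, f x :=
    fun f hf => Fintype.sum_of_injective y hy _ _ hf (fun _ => rfl)
  have νw : ∀ k, ν {w k} ≠ 0 := fun k => by
    rw [hν, emp_sing]
    refine mul_ne_zero (ENNReal.inv_ne_zero.2 hNt) ?_
    intro h
    rw [Finset.sum_eq_zero_iff] at h
    simpa using h k (Finset.mem_univ k)
  have row : ∀ i, ∑ k, g (y i) (w k) / ν {w k} = 1 := fun i => by
    rw [sumw (fun v => g (y i) v / ν {v})]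
    simp only [cancel]
    rw [g1, μy, ENNReal.mul_inv_cancel hN0 hNt]
  have col : ∀ k, ∑ i, g (y i) (w k) / ν {w k} = 1 := fun k => by
    rw [sumy (fun x => g x (w k) / ν {w k})]
    · simp only [div_eq_mul_inv, ← Finset.sum_mul]
      rw [g2, ENNReal.mul_inv_cancel (νw k) (measure_ne_top _ _)]
    · intro x hx
      have := gμ x (w k)
      rw [μ0 x hx] at this
      simp [le_antisymm this zero_le]
  have fin : ∀ i k, g (y i) (w k) / ν {w k} ≠ ⊤ := fun i k => by
    refine ne_top_of_le_ne_top ENNReal.one_ne_top ?_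
    rw [← row i]
    exact Finset.single_le_sum (f := fun k => g (y i) (w k) / ν {w k}) (fun _ _ => zero_le)
      (Finset.mem_univ k)
  have hM : Matrix.of (fun i k => (g (y i) (w k) / ν {w k}).toReal) ∈
      doublyStochastic ℝ (Fin N) := by
    rw [mem_doublyStochastic_iff_sum]
    refine ⟨fun i k => ENNReal.toReal_nonneg, fun i => ?_, fun k => ?_⟩
    · simp only [Matrix.of_apply]
      rw [← ENNReal.toReal_sum (fun k _ => fin i k), row, ENNReal.toReal_one]
    · simp only [Matrix.of_apply]
      rw [← ENNReal.toReal_sum (fun i _ => fin i k), col, ENNReal.toReal_one]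
  have hfin := ENNReal.ofReal_le_ofReal (hσ _ hM)
  simp only [Matrix.of_apply] at hfin
  rw [ENNReal.ofReal_sum_of_nonneg (fun i _ => by positivity),
    ENNReal.ofReal_sum_of_nonneg (fun i _ => by positivity)] at hfin
  simp only [← hed] at hfin
  have e : ∀ i, ENNReal.ofReal (∑ k, dist (y i) (w k) ^ p * (g (y i) (w k) / ν {w k}).toReal)
      = N * ∑ v, edist (y i) v ^ p * g (y i) v := fun i => by
    rw [ENNReal.ofReal_sum_of_nonneg (fun i _ => by positivity)]
    have : ∀ k, ENNReal.ofReal (dist (y i) (w k) ^ p * (g (y i) (w k) / ν {w k}).toReal)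
        = (fun v => edist (y i) v ^ p * (g (y i) v / ν {v})) (w k) := fun k => by
      rw [ENNReal.ofReal_mul (by positivity), ENNReal.ofReal_toReal (fin i k), ← hed]
    rw [Finset.sum_congr rfl fun k _ => this k,
      sumw (fun v => edist (y i) v ^ p * (g (y i) v / ν {v}))]
    simp only [mul_assoc, cancel]
  rw [Finset.sum_congr rfl fun i _ => e i, ← Finset.mul_sum,
    sumy (fun x => ∑ v, edist x v ^ p * g x v)] at hfin
  · calc _ ≤ (N : ℝ≥0∞)⁻¹ * (N * ∑ x, ∑ v, edist x v ^ p * g x v) := by gcongr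
      _ = _ := by rw [← mul_assoc, ENNReal.inv_mul_cancel hN0 hNt, one_mul]
  · intro x hx
    refine Finset.sum_eq_zero fun v _ => ?_
    have := gμ x v
    rw [μ0 x hx] at this
    simp [le_antisymm this zero_le]

lemma exp_dev [Fintype E] [MeasurableSpace E] [MeasurableSingletonClass E]
    (m : Measure E) [IsProbabilityMeasure m] (n : ℕ) (hn : 1 ≤ n) (x : E) :
    ∫⁻ X, ((empiricalMeasure n X {x} - m {x}) + (m {x} - empiricalMeasure n X {x}))
      ∂(sampleMeasure m n) ≤ ENNReal.ofReal (Real.sqrt (m.real {x} / n)) := by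
  classical
  unfold sampleMeasure
  set P : Measure (Fin n → E) := Measure.pi fun _ => m with hP
  have hn0 : (n : ℝ) ≠ 0 := by positivity
  set f : E → ℝ := fun e => (n : ℝ)⁻¹ * if e = x then 1 else 0 with hf
  set S : (Fin n → E) → ℝ := ∑ i : Fin n, fun X => f (X i) with hS
  have hSe : ∀ X, (empiricalMeasure n X {x}) = ENNReal.ofReal (S X) := by
    intro X
    rw [emp_sing, hS, Finset.sum_apply]
    simp only [hf]
    rw [← Finset.mul_sum, ENNReal.ofReal_mul (by positivity),
      ENNReal.ofReal_inv_of_pos (by positivity), ENNReal.ofReal_natCast,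
      ENNReal.ofReal_sum_of_nonneg (fun i _ => by positivity)]
    congr 1
    refine Finset.sum_congr rfl fun i _ => ?_
    split_ifs <;> simp
  have hS0 : ∀ X, 0 ≤ S X := fun X => by
    rw [hS, Finset.sum_apply]; exact Finset.sum_nonneg fun i _ => by simp only [hf]; positivity
  have hme : m {x} = ENNReal.ofReal (m.real {x}) := by simp [Measure.real]
  have hint : ∀ X, ((empiricalMeasure n X {x} - m {x}) + (m {x} - empiricalMeasure n X {x}))
      = ENNReal.ofReal |S X - m.real {x}| := by
    intro X
    rw [hSe, hme, ← ENNReal.ofReal_sub _ (hS0 X), ← ENNReal.ofReal_sub _ measureReal_nonneg]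
    rcases le_total (S X) (m.real {x}) with h | h
    · rw [ENNReal.ofReal_of_nonpos (sub_nonpos.2 h), zero_add, abs_of_nonpos (sub_nonpos.2 h),
        neg_sub]
    · rw [ENNReal.ofReal_of_nonpos (p := _ - S X) (sub_nonpos.2 h), add_zero,
        abs_of_nonneg (sub_nonneg.2 h)]
  simp only [hint]
  have hI : ∀ h : (Fin n → E) → ℝ, Integrable h P := fun h => Integrable.of_finite
  have hL : ∀ h : (Fin n → E) → ℝ, MemLp h 2 P := fun h => MemLp.of_discrete
  rw [← ofReal_integral_eq_lintegral_ofReal (hI _) (ae_of_all _ fun X => abs_nonneg _)]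
  apply ENNReal.ofReal_le_ofReal
  apply Real.le_sqrt_of_sq_le
  have fi : ∫ e, f e ∂m = (n : ℝ)⁻¹ * m.real {x} := by
    simp only [hf, integral_const_mul]
    congr 1
    have : (fun e : E => if e = x then (1 : ℝ) else 0) = Set.indicator {x} 1 := by
      funext e; simp [Set.indicator]
    rw [this, integral_indicator_one (measurableSet_singleton x)]
  have ES : ∫ X, S X ∂P = m.real {x} := by
    simp only [hS, Finset.sum_apply]
    rw [integral_finsetSum _ fun i _ => hI _]
    have : ∀ i : Fin n, ∫ X, f (X i) ∂P = (n : ℝ)⁻¹ * m.real {x} := by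
      intro i
      rw [← fi, hP]
      have := (measurePreserving_eval (fun _ : Fin n => m) i)
      exact integral_comp_eval (μ := fun _ : Fin n => m) (i := i) (f := f)
        (measurable_of_finite f).aestronglyMeasurable
    simp only [this]
    simp
    field_simp
  have VS : ProbabilityTheory.variance S P ≤ m.real {x} / n := by
    rw [hS, hP, ProbabilityTheory.variance_sum_pi (fun i => MemLp.of_discrete)]
    have : ProbabilityTheory.variance f m ≤ (n : ℝ)⁻¹ * ((n : ℝ)⁻¹ * m.real {x}) := by
      refine (ProbabilityTheory.variance_le_expectation_sq
        (measurable_of_finite f).aestronglyMeasurable).trans (le_of_eq ?_)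
      rw [← fi, ← integral_const_mul]
      congr 1
      funext e
      simp only [hf, Pi.pow_apply]
      split_ifs <;> simp [sq]
    simp only [Finset.sum_const, Finset.card_univ, Fintype.card_fin, nsmul_eq_mul]
    calc _ ≤ (n : ℝ) * ((n : ℝ)⁻¹ * ((n : ℝ)⁻¹ * m.real {x})) := by gcongr
      _ = _ := by field_simp
  refine le_trans ?_ VS
  have v1 := ProbabilityTheory.variance_nonneg (fun X => |S X - m.real {x}|) P
  rw [ProbabilityTheory.variance_eq_sub (hL _)] at v1
  have v2 := ProbabilityTheory.variance_eq_integral (μ := P) (X := S)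
    (measurable_of_finite S).aemeasurable
  rw [ES] at v2
  simp only [Pi.pow_apply, sq_abs] at v1
  linarith

end Helpers2

/-- **Lemma (chainingwp).** Let `(E, d_E)` be a finite metric space, `p ≥ 1`,
`y₁, …, y_{2r} ∈ E` distinct and `z₁, …, z_r ∈ E`. Let `μ = (1/(2r)) ∑ δ_{y_i}` and
`μ̃ = (1/r) ∑ δ_{z_i}`, with empirical measures `μ_n`, `μ̃_n` of sample size `n`. Then
`‖W_p^$(μ_n, μ)‖_{L^p} ≤ ‖W_p^$(μ̃_n, μ̃)‖_{L^p} + 2^{1−1/p} (2r/n)^{1/(2p)} W_p(μ, μ̃)`. -/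
theorem stmt_15 {E : Type*} [MetricSpace E] [Fintype E]
    [MeasurableSpace E] [BorelSpace E]
    (p : ℝ) (hp : 1 ≤ p) (r n : ℕ) (hr : 1 ≤ r) (hn : 1 ≤ n)
    (y : Fin (2 * r) → E) (hy : Function.Injective y) (z : Fin r → E) :
    (∫⁻ X, (WpDollar p (empiricalMeasure n X) (empiricalMeasure (2 * r) y)) ^ p
        ∂(sampleMeasure (empiricalMeasure (2 * r) y) n)) ^ (1 / p) ≤
      (∫⁻ X, (WpDollar p (empiricalMeasure n X) (empiricalMeasure r z)) ^ p
          ∂(sampleMeasure (empiricalMeasure r z) n)) ^ (1 / p) +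
        ENNReal.ofReal
            ((2 : ℝ) ^ (1 - 1 / p) * ((2 * (r : ℝ) / n) ^ (1 / (2 * p)))) *
          Wp p (empiricalMeasure (2 * r) y) (empiricalMeasure r z) := by
  classical
  have hpp : (0 : ℝ) < p := by positivity
  have hip : (0 : ℝ) ≤ 1 / p := by positivity
  have hn0 : (0 : ℝ) < n := by exact_mod_cast hn
  have hr0 : (0 : ℝ) < r := by exact_mod_cast hr
  obtain ⟨w, hw⟩ := emp_double r z
  rw [← hw]
  obtain ⟨T, hT, hcost⟩ := exists_map hp (2 * r) (by omega) y hy w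
  set μ := empiricalMeasure (2 * r) y with hμ
  set ν := empiricalMeasure (2 * r) w with hν
  have pμ : IsProbabilityMeasure μ := isProb_emp (2 * r) (by omega) y
  have pν : IsProbabilityMeasure ν := isProb_emp (2 * r) (by omega) w
  set G : (Fin n → E) → ℝ≥0∞ := fun X => 2 ^ (p - 1) * ∑ x, edist x (T x) ^ p *
    ((empiricalMeasure n X {x} - μ {x}) + (μ {x} - empiricalMeasure n X {x})) with hG
  have hpt : ∀ X : Fin n → E, WpDollar p (empiricalMeasure n X) μ ≤
      WpDollar p (empiricalMeasure n (fun i => T (X i))) ν + G X ^ (1 / p) := by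
    intro X
    have p1 : IsProbabilityMeasure (empiricalMeasure n X) := isProb_emp n hn X
    have p2 : IsProbabilityMeasure (empiricalMeasure n (fun i => T (X i))) :=
      isProb_emp n hn _
    rw [WpDollar_eq hp, WpDollar_eq hp]
    have h := FW_chain hp (fun x => empiricalMeasure n X {x}) (fun x => μ {x})
      (fun x => measure_ne_top _ _) (fun x => measure_ne_top _ _) T
    simp only [← map_sing, hT, map_emp] at h
    exact h
  have hsm : sampleMeasure ν n = (sampleMeasure μ n).map (fun X i => T (X i)) := by
    unfold sampleMeasure
    have : IsProbabilityMeasure (μ.map T) := by rw [hT]; exact pν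
    rw [Measure.pi_map_pi (fun _ => (measurable_of_finite T).aemeasurable), hT]
  rw [hsm, lintegral_map (measurable_of_finite _) (measurable_of_finite _)]
  have hmink := ENNReal.lintegral_Lp_add_le (μ := sampleMeasure μ n)
    (f := fun X => WpDollar p (empiricalMeasure n (fun i => T (X i))) ν)
    (g := fun X => G X ^ (1 / p)) (measurable_of_finite _).aemeasurable
    (measurable_of_finite _).aemeasurable hp
  refine le_trans ?_ (hmink.trans ?_)
  · refine ENNReal.rpow_le_rpow (lintegral_mono fun X => ?_) hip
    exact ENNReal.rpow_le_rpow (hpt X) hpp.le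
  refine add_le_add le_rfl ?_
  simp only [← ENNReal.rpow_mul, one_div_mul_cancel hpp.ne', ENNReal.rpow_one]
  have hdev : ∀ x, ∫⁻ X, ((empiricalMeasure n X {x} - μ {x}) +
      (μ {x} - empiricalMeasure n X {x})) ∂(sampleMeasure μ n) ≤
      ENNReal.ofReal (Real.sqrt (2 * r / n)) * μ {x} := by
    intro x
    refine (exp_dev μ n hn x).trans (le_of_eq ?_)
    have hμx : μ.real {x} = 0 ∨ μ.real {x} = (2 * (r : ℝ))⁻¹ := by
      by_cases hx : ∃ i, y i = x
      · right
        obtain ⟨i, rfl⟩ := hx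
        rw [Measure.real, hμ, emp_sing]
        simp [hy.eq_iff]
      · left
        rw [Measure.real, hμ, emp_sing]
        push Not at hx
        simp [hx]
    have : μ {x} = ENNReal.ofReal (μ.real {x}) := by simp [Measure.real]
    rw [this, ← ENNReal.ofReal_mul (by positivity)]
    congr 1
    rcases hμx with h | h
    · simp [h]
    · rw [h, Real.sqrt_eq_iff_mul_self_eq (by positivity) (by positivity)]
      have := Real.mul_self_sqrt (show (0 : ℝ) ≤ 2 * r / n by positivity)
      symm
      calc _ = (Real.sqrt (2 * r / n) * Real.sqrt (2 * r / n)) * ((2 * (r : ℝ))⁻¹ * (2 * (r : ℝ))⁻¹) := by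
            ring
        _ = _ := by rw [this]; field_simp
  have hGint : ∫⁻ X, G X ∂(sampleMeasure μ n) ≤
      2 ^ (p - 1) * (ENNReal.ofReal (Real.sqrt (2 * r / n)) * Wp p μ ν ^ p) := by
    simp only [hG]
    rw [lintegral_const_mul _ (measurable_of_finite _),
      lintegral_finsetSum _ fun x _ => measurable_of_finite _]
    refine mul_le_mul_right ?_ _
    refine le_trans ?_ (mul_le_mul_right hcost _)
    rw [Finset.mul_sum]
    refine Finset.sum_le_sum fun x _ => ?_
    rw [lintegral_const_mul _ (measurable_of_finite _)]
    refine (mul_le_mul_right (hdev x) _).trans (le_of_eq (by ring))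
  refine (ENNReal.rpow_le_rpow hGint hip).trans (le_of_eq ?_)
  rw [ENNReal.mul_rpow_of_nonneg _ _ hip, ENNReal.mul_rpow_of_nonneg _ _ hip,
    ← ENNReal.rpow_mul, ← ENNReal.rpow_mul, mul_one_div_cancel hpp.ne', ENNReal.rpow_one,
    ← mul_assoc]
  congr 1
  rw [ENNReal.ofReal_mul (by positivity), ← ENNReal.ofReal_rpow_of_pos (by norm_num),
    ENNReal.ofReal_rpow_of_nonneg (by positivity) hip]
  congr 2
  · simp
  · field_simp
  · rw [Real.sqrt_eq_rpow, ← Real.rpow_mul (by positivity)]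
    congr 1
    field_simp
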